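/- Let E be an ordered Polish space satisfying condition (BMC), and let P be a monotone Markov kernel on E. Assume condition (PR): there exist two points x₀ ⪯ y₀ such that the hitting times ν⁻ = min{n ≥ 1 : Xₙ^{x₀} ⪰ x₀} and ν⁺ = min{n ≥ 1 : Xₙ^{y₀} ⪯ y₀} have finite expectations. Then the Markov chain admits at least one stationary distribution. -/

import Mathlib

open MeasureTheory ProbabilityTheory Filter Topology

/-- `μ` is *stochastically smaller* than `ν` (written `μ ⪯ ν` in the paper):
`μ I ≤ ν I` for every Borel increasing (upper) set `I`. -/
def StochDom {E : Type*} [MeasurableSpace E] [Preorder E] (μ ν : Measure E) : Prop :=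
  ∀ I : Set E, MeasurableSet I → IsUpperSet I → μ I ≤ ν I

/-- A Markov kernel `P` is *(stochastically) monotone* if for every bounded monotone
measurable `g : E → [0,1]` the map `x ↦ ∫ g dP(x)` is again monotone. -/
def MonotoneKernel {E : Type*} [MeasurableSpace E] [Preorder E] (P : Kernel E E) : Prop :=
  ∀ g : E → ℝ, Measurable g → Monotone g → (∀ x, g x ∈ Set.Icc (0 : ℝ) 1) →
    Monotone fun x => ∫ y, g y ∂(P x)

/-- The `n`-step transition kernel `P⁽ⁿ⁾` of a Markov kernel `P`;
`kpow P n x` is the law of `Xₙˣ`, the chain with kernel `P` started at `x`. -/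
noncomputable def kpow {E : Type*} [MeasurableSpace E] (P : Kernel E E) : ℕ → Kernel E E
  | 0 => Kernel.id
  | n + 1 => P.comp (kpow P n)

/-- The process `Z` on `(Ω, μ)` is a (possibly time-inhomogeneous) Markov chain with
one-step kernels `Q n`, expressed through finite-dimensional distributions: for every
bounded measurable cylinder functional `φ` of the past and every Borel set `A`,
`E[φ(Z₀,…,Zₙ) · 1_A(Z_{n+1})] = E[φ(Z₀,…,Zₙ) · (Q n)(Zₙ, A)]`. -/
def MCStep {Ω S : Type*} [MeasurableSpace Ω] [MeasurableSpace S]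
    (μ : Measure Ω) (Q : ℕ → Kernel S S) (Z : ℕ → Ω → S) : Prop :=
  ∀ (n : ℕ) (A : Set S), MeasurableSet A →
    ∀ φ : (Fin (n + 1) → S) → ℝ, Measurable φ → (∀ v, φ v ∈ Set.Icc (0 : ℝ) 1) →
      ∫ ω, φ (fun i => Z i.1 ω) * A.indicator (fun _ => (1 : ℝ)) (Z (n + 1) ω) ∂μ
        = ∫ ω, φ (fun i => Z i.1 ω) * ((Q n) (Z n ω) A).toReal ∂μ

/-- `X` on `(Ω, μ)` is a time-homogeneous Markov chain with kernel `P` started at `x`. -/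
def IsMChain {E Ω : Type*} [MeasurableSpace E] [MeasurableSpace Ω]
    (P : Kernel E E) (x : E) (μ : Measure Ω) (X : ℕ → Ω → E) : Prop :=
  IsProbabilityMeasure μ ∧ (∀ n, Measurable (X n)) ∧ (∀ᵐ ω ∂μ, X 0 ω = x) ∧
    MCStep μ (fun _ => P) X

/-- A *Markovian coupling* of two chains with kernel `P` started at `x` and `y`:
both coordinates are Markov chains with kernel `P` and the pair process is itself a
(possibly time-inhomogeneous) Markov chain. -/
def IsMarkovianCoupling {E Ω : Type*} [MeasurableSpace E] [MeasurableSpace Ω]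
    (P : Kernel E E) (x y : E) (μ : Measure Ω) (X Y : ℕ → Ω → E) : Prop :=
  IsMChain P x μ X ∧ IsMChain P y μ Y ∧
    ∃ Q : ℕ → Kernel (E × E) (E × E), (∀ n, IsMarkovKernel (Q n)) ∧
      MCStep μ Q fun n ω => (X n ω, Y n ω)

/-- A set `H ⊆ E × E` is *achievable* for the kernel `P` if for all `x, y` there is a
Markovian coupling of the chains started at `x` and `y` whose hitting time of `H`
is finite almost surely. -/
def Achievable {E : Type*} [MeasurableSpace E] (P : Kernel E E) (H : Set (E × E)) : Prop :=
  ∀ x y : E, ∃ (Ω : Type) (_ : MeasurableSpace Ω) (μ : Measure Ω) (X Y : ℕ → Ω → E),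
    IsMarkovianCoupling P x y μ X Y ∧ ∀ᵐ ω ∂μ, ∃ n, (X n ω, Y n ω) ∈ H

/-- Condition (BMC): every increasing sequence bounded above by some element converges. -/
def BMC (E : Type*) [Preorder E] [TopologicalSpace E] : Prop :=
  ∀ (x : ℕ → E) (y : E), Monotone x → (∀ n, x n ≤ y) → ∃ l, Tendsto x atTop (nhds l)

/-- The ordered metric space `E` is *normal*: there is a continuous `h : [0,∞) → [0,∞)`
with `h 0 = 0` such that `x ⪯ y ⪯ z` implies `d(x,y) ≤ h (d(x,z))`. -/
def NormalOrdered (E : Type*) [PseudoMetricSpace E] [Preorder E] : Prop :=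
  ∃ h : ℝ → ℝ, ContinuousOn h (Set.Ici 0) ∧ h 0 = 0 ∧ (∀ t ≥ (0 : ℝ), 0 ≤ h t) ∧
    ∀ x y z : E, x ≤ y → y ≤ z → dist x y ≤ h (dist x z)

/-- Condition (PR): there are `x₀ ⪯ y₀` such that the hitting times
`ν⁻ = min {n ≥ 1 : Xₙ^{x₀} ⪰ x₀}` and `ν⁺ = min {n ≥ 1 : Xₙ^{y₀} ⪯ y₀}`
have finite expectations. -/
def PRCond {E : Type*} [MeasurableSpace E] [Preorder E] (P : Kernel E E) : Prop :=
  ∃ x₀ y₀ : E, x₀ ≤ y₀ ∧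
    (∃ (Ω : Type) (_ : MeasurableSpace Ω) (μ : Measure Ω) (X : ℕ → Ω → E),
      IsMChain P x₀ μ X ∧ (∀ᵐ ω ∂μ, ∃ n, 1 ≤ n ∧ x₀ ≤ X n ω) ∧
      Integrable (fun ω => ((sInf {n : ℕ | 1 ≤ n ∧ x₀ ≤ X n ω} : ℕ) : ℝ)) μ) ∧
    (∃ (Ω : Type) (_ : MeasurableSpace Ω) (μ : Measure Ω) (X : ℕ → Ω → E),
      IsMChain P y₀ μ X ∧ (∀ᵐ ω ∂μ, ∃ n, 1 ≤ n ∧ X n ω ≤ y₀) ∧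
      Integrable (fun ω => ((sInf {n : ℕ | 1 ≤ n ∧ X n ω ≤ y₀} : ℕ) : ℝ)) μ)

/-!
Run the chain from `x₀` until it first returns to `[x₀, ∞)` and normalise its expected occupation
measure, whose mass is `𝔼 ν⁻ < ∞`, to a law `α`. Applying `P` replaces the starting point `x₀` by
the point of return, which lies above `x₀`, so `α ⪯ αP`; dually `y₀` yields a law `β` with
`βP ⪯ β`. To compare the two, discount time by `s < 1`: then `αₛ ⪯ s αₛP + (1 - s) δ_{x₀}` and
`s βₛP + (1 - s) δ_{y₀} ⪯ βₛ`, and iterating these inequalities shrinks the error by `s` at each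
step, so that `αₛ ⪯ βₛ`; now let `s → 1`.

By Strassen's theorem a bounded increasing sequence of laws is realised by an almost surely
increasing bounded sequence of random points, so by (BMC) it has a least upper bound. Since
`μ ↦ ∫ g dμ` is strictly increasing for a bounded strictly increasing `g`, the Brezis–Browder
principle gives a law `π` that is maximal among those with `π ⪯ πP` and `π ⪯ β`; as `πP` is another
such law, `πP = π`.
-/

open scoped ENNReal NNReal

section OrderTheory

/-- The Brezis–Browder ordering principle: a greedy sequence, which at each step almost attains
the supremum of `Φ` above the current point, has only maximal upper bounds. -/
theorem exists_isMax_of_strictMono {α : Type*} [PartialOrder α] [Nonempty α] {Φ : α → ℝ}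
    (hΦ : StrictMono Φ) (hbdd : BddAbove (Set.range Φ))
    (hseq : ∀ x : ℕ → α, Monotone x → BddAbove (Set.range x)) : ∃ m : α, IsMax m := by
  have almost_sup (n : ℕ) (a : α) : ∃ b, a ≤ b ∧ ∀ c, a ≤ c → Φ c < Φ b + 1 / (n + 1) := by
    have hbdd' : BddAbove (Φ '' Set.Ici a) := hbdd.mono (Set.image_subset_range _ _)
    obtain ⟨_, ⟨b, hab, rfl⟩, hb⟩ := exists_lt_of_lt_csSup (Set.nonempty_Ici.image Φ)
      (sub_lt_self (sSup (Φ '' Set.Ici a)) (Nat.one_div_pos_of_nat (n := n)))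
    refine ⟨b, hab, fun c hac => ?_⟩
    have := le_csSup hbdd' (Set.mem_image_of_mem Φ hac)
    linarith
  choose next le_next next_almost_sup using almost_sup
  let x : ℕ → α := Nat.rec (Classical.arbitrary α) next
  obtain ⟨m, hm⟩ := hseq x (monotone_nat_of_le_succ fun n => le_next n (x n))
  rw [mem_upperBounds, Set.forall_mem_range] at hm
  refine ⟨m, fun b hmb => ?_⟩
  have hle : Φ b ≤ Φ m := le_of_forall_pos_lt_add fun ε hε => by
    obtain ⟨n, hn⟩ := exists_nat_one_div_lt hε
    have hlt : Φ b < Φ (x (n + 1)) + 1 / (n + 1) := next_almost_sup n _ b ((hm n).trans hmb)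
    have := hΦ.monotone (hm (n + 1))
    linarith
  by_contra hbm
  exact hle.not_gt (hΦ (lt_of_le_not_ge hmb hbm))

theorem exists_isFixedPt_of_le_of_strictMono {α : Type*} [PartialOrder α] {Φ : α → ℝ}
    (hΦ : StrictMono Φ) (hbdd : BddAbove (Set.range Φ))
    (hseq : ∀ x : ℕ → α, Monotone x → BddAbove (Set.range x) → ∃ s, IsLUB (Set.range x) s)
    {T : α → α} (hT : Monotone T) {a b : α} (hab : a ≤ b) (ha : a ≤ T a) (hb : T b ≤ b) :
    ∃ c, Function.IsFixedPt T c := by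
  let S := {x : α // x ≤ T x ∧ x ≤ b}
  have : Nonempty S := ⟨⟨a, ha, hab⟩⟩
  have bounded_seq (x : ℕ → S) (hx : Monotone x) : BddAbove (Set.range x) := by
    have hub : b ∈ upperBounds (Set.range fun n => (x n).1) :=
      Set.forall_mem_range.2 fun n => (x n).2.2
    obtain ⟨s, hs⟩ := hseq (fun n => (x n).1) (fun _ _ hmn => hx hmn) ⟨b, hub⟩
    have le_s (n : ℕ) : (x n).1 ≤ s := hs.1 ⟨n, rfl⟩
    have s_le : s ≤ T s :=
      hs.2 (Set.forall_mem_range.2 fun n => (x n).2.1.trans (hT (le_s n)))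
    exact ⟨⟨s, s_le, hs.2 hub⟩, Set.forall_mem_range.2 le_s⟩
  obtain ⟨⟨c, hcT, hcb⟩, hmax⟩ := exists_isMax_of_strictMono (Φ := fun x : S => Φ x)
    (fun _ _ hxy => hΦ hxy) (hbdd.mono (Set.range_comp_subset_range _ Φ)) bounded_seq
  have hTc : T c ≤ c := hmax (b := ⟨T c, hT hcT, (hT hcb).trans hb⟩) hcT
  exact ⟨c, hTc.antisymm hcT⟩

end OrderTheory

section StochasticOrder

theorem monotone_indicator_one_of_isUpperSet {E M : Type*} [Zero M] [One M] [Preorder M]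
    [ZeroLEOneClass M] [Preorder E] {I : Set E} (hup : IsUpperSet I) :
    Monotone (I.indicator (1 : E → M)) := fun x y hxy => by
  by_cases hx : x ∈ I
  · simp only [Set.indicator_of_mem hx, Set.indicator_of_mem (hup hxy hx), Pi.one_apply, le_refl]
  · rw [Set.indicator_of_notMem hx]
    exact Set.indicator_nonneg (fun _ _ => zero_le_one) y

variable {E : Type*} [MeasurableSpace E]

namespace StochDom

section Preorder

variable [Preorder E] {μ μ' ν ν' ρ : Measure E}

theorem refl (μ : Measure E) : StochDom μ μ := fun _ _ _ => le_rfl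

theorem trans (h : StochDom μ ν) (h' : StochDom ν ρ) : StochDom μ ρ :=
  fun I hI hup => (h I hI hup).trans (h' I hI hup)

theorem add (h : StochDom μ ν) (h' : StochDom μ' ν') : StochDom (μ + μ') (ν + ν') :=
  fun I hI hup => by
    simpa only [Measure.add_apply] using add_le_add (h I hI hup) (h' I hI hup)

theorem smul (c : ℝ≥0∞) (h : StochDom μ ν) : StochDom (c • μ) (c • ν) :=
  fun I hI hup => by
    simpa only [Measure.smul_apply, smul_eq_mul] using mul_le_mul_right (h I hI hup) c

theorem map {F : Type*} [MeasurableSpace F] [Preorder F] (h : StochDom μ ν) {f : E → F}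
    (hf : Measurable f) (hmono : Monotone f) : StochDom (μ.map f) (ν.map f) :=
  fun I hI hup => by
    simpa only [Measure.map_apply hf hI] using h _ (hf hI) (hup.preimage hmono)

theorem dirac {x y : E} (hxy : x ≤ y) : StochDom (.dirac x) (.dirac y) := fun I hI hup => by
  simp only [Measure.dirac_apply' _ hI]
  exact monotone_indicator_one_of_isUpperSet hup hxy

theorem of_ae_le {Ω : Type*} [MeasurableSpace Ω] {P : Measure Ω} {f g : Ω → E}
    (hf : Measurable f) (hg : Measurable g) (hfg : ∀ᵐ ω ∂P, f ω ≤ g ω) :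
    StochDom (P.map f) (P.map g) := fun I hI hup => by
  rw [Measure.map_apply hf hI, Measure.map_apply hg hI]
  exact measure_mono_ae (hfg.mono fun ω hω => hup hω)

theorem of_forall_isLowerSet [IsProbabilityMeasure μ] [IsProbabilityMeasure ν]
    (h : ∀ L, MeasurableSet L → IsLowerSet L → ν L ≤ μ L) : StochDom μ ν := fun I hI hup => by
  have hle := h Iᶜ hI.compl hup.compl
  rw [prob_compl_eq_one_sub hI, prob_compl_eq_one_sub hI] at hle
  exact (ENNReal.sub_le_sub_iff_left prob_le_one ENNReal.one_ne_top).1 hle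

theorem lintegral_ofReal_le (h : StochDom μ ν) {g : E → ℝ} (hg : Measurable g)
    (hmono : Monotone g) (hnonneg : 0 ≤ g) :
    ∫⁻ x, ENNReal.ofReal (g x) ∂μ ≤ ∫⁻ x, ENNReal.ofReal (g x) ∂ν := by
  rw [lintegral_eq_lintegral_meas_lt μ (.of_forall hnonneg) hg.aemeasurable,
    lintegral_eq_lintegral_meas_lt ν (.of_forall hnonneg) hg.aemeasurable]
  exact lintegral_mono fun t => h _ (measurableSet_lt measurable_const hg)
    fun _ _ hxy hx => lt_of_lt_of_le hx (hmono hxy)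

theorem integral_le [IsProbabilityMeasure μ] [IsProbabilityMeasure ν] (h : StochDom μ ν)
    {g : E → ℝ} (hg : Measurable g) (hmono : Monotone g) {C : ℝ} (hC : ∀ x, |g x| ≤ C) :
    ∫ x, g x ∂μ ≤ ∫ x, g x ∂ν := by
  have hint (ρ : Measure E) [IsProbabilityMeasure ρ] : Integrable g ρ :=
    .of_bound hg.aestronglyMeasurable C (.of_forall hC)
  have hnonneg : 0 ≤ fun x => g x + C := fun x => neg_le_iff_add_nonneg.1 (neg_le_of_abs_le (hC x))
  have hle : ∫ x, (g x + C) ∂μ ≤ ∫ x, (g x + C) ∂ν := by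
    rw [integral_eq_lintegral_of_nonneg_ae (.of_forall hnonneg) (by fun_prop),
      integral_eq_lintegral_of_nonneg_ae (.of_forall hnonneg) (by fun_prop)]
    refine ENNReal.toReal_mono ?_
      (h.lintegral_ofReal_le (hg.add_const C) (hmono.add_const C) hnonneg)
    exact ((hint ν).add (integrable_const C)).lintegral_lt_top.ne
  simpa [integral_add (hint _) (integrable_const C)] using hle

end Preorder

end StochDom

variable [Preorder E] {P : Kernel E E}

theorem MonotoneKernel.measureReal_mono (hP : MonotoneKernel P) {I : Set E}
    (hI : MeasurableSet I) (hup : IsUpperSet I) : Monotone fun x => (P x).real I := by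
  simpa only [integral_indicator_one hI] using
    hP (I.indicator 1) (measurable_one.indicator hI)
      (monotone_indicator_one_of_isUpperSet hup) fun x =>
      ⟨Set.indicator_nonneg (fun _ _ => zero_le_one) x,
        Set.indicator_le_self' (fun _ _ => zero_le_one) x⟩

theorem StochDom.bind [IsFiniteKernel P] (hP : MonotoneKernel P) {μ ν : Measure E}
    (h : StochDom μ ν) : StochDom (μ.bind P) (ν.bind P) := fun I hI hup => by
  rw [Measure.bind_apply hI P.aemeasurable, Measure.bind_apply hI P.aemeasurable]
  simpa only [measureReal_def, ENNReal.ofReal_toReal (measure_ne_top _ I)] using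
    h.lintegral_ofReal_le (P.measurable_coe hI).ennreal_toReal
    (hP.measureReal_mono hI hup) fun x => measureReal_nonneg

end StochasticOrder

section Taboo

variable {E : Type*} [MeasurableSpace E]

/-- The law at time `n` of the chain with kernel `P` started at `x` and killed when it enters `U`
at a time `≥ 1`. -/
noncomputable def tabooMeasure (P : Kernel E E) (U : Set E) (x : E) : ℕ → Measure E
  | 0 => .dirac x
  | n + 1 => ((tabooMeasure P U x n).bind P).restrict Uᶜ

/-- The Green measure of the killed chain of `tabooMeasure`, in which time `n` is discounted by
`s ^ n`. -/
noncomputable def greenMeasure (P : Kernel E E) (U : Set E) (x : E) (s : ℝ≥0∞) : Measure E :=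
  Measure.sum fun n => s ^ n • tabooMeasure P U x n

/-- The Green measure of the killed chain, normalized to a probability measure. -/
noncomputable def greenLaw (P : Kernel E E) (U : Set E) (x : E) (s : ℝ≥0∞) : Measure E :=
  (greenMeasure P U x s Set.univ)⁻¹ • greenMeasure P U x s

variable {P : Kernel E E} {U : Set E} {x : E} {s : ℝ≥0∞}

theorem greenMeasure_apply (A : Set E) :
    greenMeasure P U x s A = ∑' n, s ^ n * tabooMeasure P U x n A :=
  Measure.sum_apply_of_countable _ A

theorem greenMeasure_bind_apply (A : Set E) :
    (greenMeasure P U x s).bind P A = ∑' n, s ^ n * (tabooMeasure P U x n).bind P A := by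
  rw [greenMeasure, Measure.bind_sum _ _ P.aemeasurable, Measure.sum_apply_of_countable]
  simp only [Measure.comp_smul, Measure.smul_apply, smul_eq_mul]

theorem greenMeasure_apply_eq {A : Set E} (hA : MeasurableSet A) :
    greenMeasure P U x s A = A.indicator 1 x + s * (greenMeasure P U x s).bind P (A \ U) := by
  rw [greenMeasure_apply, greenMeasure_bind_apply, tsum_eq_zero_add' ENNReal.summable,
    ← ENNReal.tsum_mul_left]
  simp only [tabooMeasure, pow_zero, one_mul, Measure.dirac_apply' _ hA,
    Measure.restrict_apply hA, pow_succ', mul_assoc, Set.sdiff_eq]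

theorem greenMeasure_univ_ne_zero : greenMeasure P U x s Set.univ ≠ 0 := by
  rw [greenMeasure_apply_eq .univ]
  simp

theorem greenMeasure_univ_ne_top (hs : s ≤ 1)
    (hfin : ∑' n, tabooMeasure P U x n Set.univ ≠ ∞) : greenMeasure P U x s Set.univ ≠ ∞ := by
  rw [greenMeasure_apply]
  exact ne_top_of_le_ne_top hfin <|
    ENNReal.tsum_le_tsum fun n => mul_le_of_le_one_left' (pow_le_one₀ zero_le hs)

theorem isProbabilityMeasure_greenLaw (hs : s ≤ 1)
    (hfin : ∑' n, tabooMeasure P U x n Set.univ ≠ ∞) :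
    IsProbabilityMeasure (greenLaw P U x s) :=
  ⟨ENNReal.inv_mul_cancel greenMeasure_univ_ne_zero (greenMeasure_univ_ne_top hs hfin)⟩

theorem greenMeasure_mass_balance [IsMarkovKernel P] (hU : MeasurableSet U) (hs : s ≤ 1)
    (hfin : ∑' n, tabooMeasure P U x n Set.univ ≠ ∞) :
    1 = (1 - s) * greenMeasure P U x s Set.univ + s * (greenMeasure P U x s).bind P U := by
  have hs' : s ≠ ∞ := ne_top_of_le_ne_top ENNReal.one_ne_top hs
  set G := greenMeasure P U x s
  have hG : G Set.univ ≠ ∞ := greenMeasure_univ_ne_top hs hfin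
  have bind_split : G.bind P (Set.univ \ U) + G.bind P U = G Set.univ := by
    conv_lhs => rw [← Set.univ_inter U, Set.sdiff_self_inter, measure_sdiff_add_inter _ hU]
    simp [Measure.bind_apply .univ P.aemeasurable]
  have hsG : s * G Set.univ ≠ ∞ := ENNReal.mul_ne_top hs' hG
  refine (ENNReal.add_left_inj hsG).1 ?_
  calc 1 + s * G Set.univ
      = (1 + s * G.bind P (Set.univ \ U)) + s * G.bind P U := by
        rw [add_assoc, ← mul_add, bind_split]
    _ = G Set.univ + s * G.bind P U := by
        rw [show G Set.univ = _ from greenMeasure_apply_eq .univ, Set.indicator_univ, Pi.one_apply]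
    _ = (1 - s) * G Set.univ + s * G.bind P U + s * G Set.univ := by
        rw [add_right_comm, ← add_mul, tsub_add_cancel_of_le hs, one_mul]

theorem greenMeasure_le [IsMarkovKernel P] (hU : MeasurableSet U) (hs : s ≤ 1)
    (hfin : ∑' n, tabooMeasure P U x n Set.univ ≠ ∞) {I : Set E} (hI : MeasurableSet I)
    (hUI : x ∈ I → U ⊆ I) :
    greenMeasure P U x s I ≤ s * (greenMeasure P U x s).bind P I
      + (1 - s) * greenMeasure P U x s Set.univ * I.indicator 1 x := by
  set G := greenMeasure P U x s
  rw [show G I = _ from greenMeasure_apply_eq hI]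
  by_cases hx : x ∈ I
  · have bind_split : G.bind P U + G.bind P (I \ U) = G.bind P I := by
      rw [add_comm, ← measure_sdiff_add_inter I hU, Set.inter_eq_self_of_subset_right (hUI hx)]
    rw [Set.indicator_of_mem hx, Pi.one_apply, mul_one]
    refine le_of_eq ?_
    calc 1 + s * G.bind P (I \ U)
        = (1 - s) * G Set.univ + s * G.bind P U + s * G.bind P (I \ U) := by
          rw [← greenMeasure_mass_balance hU hs hfin]
      _ = s * G.bind P I + (1 - s) * G Set.univ := by
          rw [add_assoc, ← mul_add, bind_split, add_comm]
  · simp only [Set.indicator_of_notMem hx, zero_add, mul_zero, add_zero]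
    gcongr
    exact Set.sdiff_subset

theorem greenLaw_le [IsMarkovKernel P] (hU : MeasurableSet U) (hs : s ≤ 1)
    (hfin : ∑' n, tabooMeasure P U x n Set.univ ≠ ∞) {I : Set E} (hI : MeasurableSet I)
    (hUI : x ∈ I → U ⊆ I) :
    greenLaw P U x s I ≤ (s • (greenLaw P U x s).bind P + (1 - s) • Measure.dirac x) I := by
  have hG := greenMeasure_univ_ne_top hs hfin (P := P) (U := U) (x := x)
  simp only [greenLaw, Measure.comp_smul, Measure.add_apply, Measure.smul_apply, smul_eq_mul,
    Measure.dirac_apply' x hI]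
  refine (mul_le_mul_right (greenMeasure_le hU hs hfin hI hUI) _).trans_eq ?_
  rw [mul_add, mul_left_comm, mul_comm (1 - s), mul_assoc _ (1 - s),
    ENNReal.inv_mul_cancel_left greenMeasure_univ_ne_zero hG]

theorem tendsto_greenMeasure_apply (hfin : ∑' n, tabooMeasure P U x n Set.univ ≠ ∞) (A : Set E) :
    Tendsto (fun s => greenMeasure P U x s A) (𝓝[<] 1) (𝓝 (greenMeasure P U x 1 A)) := by
  simp only [greenMeasure_apply, ← lintegral_count]
  refine tendsto_lintegral_filter_of_dominated_convergence (fun n => tabooMeasure P U x n Set.univ)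
    (.of_forall fun s => .of_discrete) ?_ ?_ (.of_forall fun n => ?_)
  · filter_upwards [self_mem_nhdsWithin] with s hs
    exact .of_forall fun n =>
      (mul_le_of_le_one_left' (pow_le_one₀ zero_le hs.le)).trans (measure_mono A.subset_univ)
  · rwa [lintegral_count]
  · refine ENNReal.Tendsto.mul_const ?_ (.inl (by simp))
    exact ((ENNReal.continuous_pow n).tendsto 1).mono_left nhdsWithin_le_nhds

theorem tendsto_greenLaw_apply (hfin : ∑' n, tabooMeasure P U x n Set.univ ≠ ∞) (A : Set E) :
    Tendsto (fun s => greenLaw P U x s A) (𝓝[<] 1) (𝓝 (greenLaw P U x 1 A)) :=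
  ENNReal.Tendsto.mul (tendsto_greenMeasure_apply hfin Set.univ).inv
    (.inl (ENNReal.inv_ne_zero.2 (greenMeasure_univ_ne_top le_rfl hfin)))
    (tendsto_greenMeasure_apply hfin A)
    (.inr (ENNReal.inv_ne_top.2 greenMeasure_univ_ne_zero))

section Preorder

variable [Preorder E] [IsMarkovKernel P]

theorem StochDom.of_le_bind_of_bind_le (hP : MonotoneKernel P) (hs : s < 1) {y : E}
    (hxy : x ≤ y) {μ ν : Measure E} [IsProbabilityMeasure μ]
    (hμ : StochDom μ (s • μ.bind P + (1 - s) • .dirac x))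
    (hν : StochDom (s • ν.bind P + (1 - s) • .dirac y) ν) : StochDom μ ν := by
  have approx (n : ℕ) :
      ∃ κ : Measure E, IsProbabilityMeasure κ ∧ StochDom μ (ν + s ^ n • κ) := by
    induction n with
    | zero =>
      refine ⟨μ, inferInstance, fun I _ _ => ?_⟩
      rw [pow_zero, one_smul, Measure.add_apply]
      exact le_add_self
    | succ n ih =>
      obtain ⟨κ, _, hκ⟩ := ih
      refine ⟨κ.bind P, inferInstance, ?_⟩
      have expand : s • (ν + s ^ n • κ).bind P + (1 - s) • Measure.dirac y
          = (s • ν.bind P + (1 - s) • .dirac y) + s ^ (n + 1) • κ.bind P := by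
        rw [Measure.comp_add, Measure.comp_smul, smul_add, smul_smul, ← pow_succ',
          add_right_comm]
      refine hμ.trans (((hκ.bind hP).smul s).add ((StochDom.dirac hxy).smul (1 - s)) |>.trans ?_)
      rw [expand]
      exact hν.add (.refl _)
  intro I hI hup
  have hbound (n : ℕ) : μ I ≤ ν I + s ^ n := by
    obtain ⟨κ, _, hκ⟩ := approx n
    exact (hκ I hI hup).trans (add_le_add_right (mul_le_of_le_one_right' prob_le_one) _)
  have hlim : Tendsto (fun n => ν I + s ^ n) atTop (𝓝 (ν I + 0)) :=
    tendsto_const_nhds.add (ENNReal.tendsto_pow_atTop_nhds_zero_of_lt_one hs)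
  exact ge_of_tendsto' (by rwa [add_zero] at hlim) hbound

theorem stochDom_greenLaw_Ici [TopologicalSpace E] [OpensMeasurableSpace E] [ClosedIciTopology E]
    (hs : s ≤ 1) (hfin : ∑' n, tabooMeasure P (Set.Ici x) x n Set.univ ≠ ∞) :
    StochDom (greenLaw P (Set.Ici x) x s)
      (s • (greenLaw P (Set.Ici x) x s).bind P + (1 - s) • .dirac x) :=
  fun _ hI hup => greenLaw_le measurableSet_Ici hs hfin hI fun hx => hup.Ici_subset hx

theorem stochDom_greenLaw_Iic [TopologicalSpace E] [OpensMeasurableSpace E] [ClosedIicTopology E]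
    (hs : s ≤ 1) (hfin : ∑' n, tabooMeasure P (Set.Iic x) x n Set.univ ≠ ∞) :
    StochDom (s • (greenLaw P (Set.Iic x) x s).bind P + (1 - s) • .dirac x)
      (greenLaw P (Set.Iic x) x s) := by
  have := isProbabilityMeasure_greenLaw hs hfin
  have : IsProbabilityMeasure (s • (greenLaw P (Set.Iic x) x s).bind P + (1 - s) • .dirac x) :=
    ⟨by simp [hs]⟩
  exact .of_forall_isLowerSet fun L hL hlow =>
    greenLaw_le measurableSet_Iic hs hfin hL fun hx => hlow.Iic_subset hx

theorem stochDom_greenLaw_Ici_Iic [TopologicalSpace E] [OpensMeasurableSpace E]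
    [OrderClosedTopology E] (hP : MonotoneKernel P) {y : E} (hxy : x ≤ y)
    (hx : ∑' n, tabooMeasure P (Set.Ici x) x n Set.univ ≠ ∞)
    (hy : ∑' n, tabooMeasure P (Set.Iic y) y n Set.univ ≠ ∞) :
    StochDom (greenLaw P (Set.Ici x) x 1) (greenLaw P (Set.Iic y) y 1) := fun I hI hup => by
  refine le_of_tendsto_of_tendsto (tendsto_greenLaw_apply hx I) (tendsto_greenLaw_apply hy I) ?_
  filter_upwards [self_mem_nhdsWithin] with s hs
  have := isProbabilityMeasure_greenLaw (le_of_lt hs) hx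
  exact StochDom.of_le_bind_of_bind_le hP hs hxy (stochDom_greenLaw_Ici (le_of_lt hs) hx)
    (stochDom_greenLaw_Iic (le_of_lt hs) hy) I hI hup

end Preorder

end Taboo

section HittingTime

variable {E Ω : Type*} {X : ℕ → Ω → E}

/-- The event that the process `X` avoids the set `U` at the times `1, …, n`. -/
def avoidance (X : ℕ → Ω → E) (U : Set E) (n : ℕ) : Set Ω :=
  {ω | ∀ i, 1 ≤ i → i ≤ n → X i ω ∉ U}

theorem mem_avoidance {U : Set E} {n : ℕ} {ω : Ω} :
    ω ∈ avoidance X U n ↔ ∀ i, 1 ≤ i → i ≤ n → X i ω ∉ U := Iff.rfl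

theorem avoidance_zero (U : Set E) : avoidance X U 0 = Set.univ :=
  Set.eq_univ_of_forall fun _ => mem_avoidance.2 fun _ hi hi' => by omega

theorem avoidance_succ (U : Set E) (n : ℕ) :
    avoidance X U (n + 1) = X (n + 1) ⁻¹' Uᶜ ∩ avoidance X U n := by
  ext ω
  simp only [Set.mem_inter_iff, mem_avoidance, Set.mem_preimage, Set.mem_compl_iff]
  grind

theorem tsum_indicator_avoidance_le {U : Set E} {ω : Ω} (hω : ∃ n, 1 ≤ n ∧ X n ω ∈ U) :
    ∑' n, (avoidance X U n).indicator (1 : Ω → ℝ≥0∞) ω ≤ sInf {n : ℕ | 1 ≤ n ∧ X n ω ∈ U} := by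
  set N := sInf {n : ℕ | 1 ≤ n ∧ X n ω ∈ U}
  obtain ⟨one_le, hitting⟩ : 1 ≤ N ∧ X N ω ∈ U := Nat.sInf_mem hω
  have not_avoid (n : ℕ) (hn : n ∉ Finset.range N) :
      (avoidance X U n).indicator (1 : Ω → ℝ≥0∞) ω = 0 :=
    Set.indicator_of_notMem (fun h => mem_avoidance.1 h N one_le (by simpa using hn) hitting) _
  calc ∑' n, (avoidance X U n).indicator (1 : Ω → ℝ≥0∞) ω
      = ∑ n ∈ Finset.range N, (avoidance X U n).indicator (1 : Ω → ℝ≥0∞) ω :=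
        tsum_eq_sum not_avoid
    _ ≤ ∑ n ∈ Finset.range N, 1 :=
        Finset.sum_le_sum fun n _ => Set.indicator_le_self' (fun _ _ => zero_le_one) ω
    _ = N := by simp

variable [MeasurableSpace E] [MeasurableSpace Ω] {μ : Measure Ω}

theorem MCStep.map_restrict_succ [IsFiniteMeasure μ] {Q : ℕ → Kernel E E}
    [∀ n, IsFiniteKernel (Q n)] (hQ : MCStep μ Q X) (hX : ∀ n, Measurable (X n)) {n : ℕ}
    {D : Set (Fin (n + 1) → E)} (hD : MeasurableSet D) :
    (μ.restrict ((fun ω i => X i.1 ω) ⁻¹' D)).map (X (n + 1)) =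
      ((μ.restrict ((fun ω i => X i.1 ω) ⁻¹' D)).map (X n)).bind (Q n) := by
  set B : Set Ω := (fun ω i => X i.1 ω) ⁻¹' D
  have hB : MeasurableSet B := measurable_pi_lambda _ (fun i => hX i.1) hD
  ext A hA
  have hQA : Measurable fun y => Q n y A := (Q n).measurable_coe hA
  have hQX : Measurable fun ω => Q n (X n ω) A := hQA.comp (hX n)
  have hstep := hQ n A hA (D.indicator 1) (measurable_one.indicator hD) fun v =>
    ⟨Set.indicator_nonneg (fun _ _ => zero_le_one) v,
      Set.indicator_le_self' (fun _ _ => zero_le_one) v⟩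
  have mul_eq_indicator (f : Ω → ℝ) (ω : Ω) :
      D.indicator 1 (fun i => X i.1 ω) * f ω = B.indicator f ω := by
    classical simp [Set.indicator_apply, B]
  have hleft : (μ.restrict B).real (X (n + 1) ⁻¹' A) = ∫ ω, D.indicator 1 (fun i => X i.1 ω) *
      A.indicator (fun _ => (1 : ℝ)) (X (n + 1) ω) ∂μ := by
    rw [← integral_indicator_one (hX _ hA), ← integral_indicator hB]
    congr with ω
    exact (mul_eq_indicator _ ω).symm
  have hright : ((((μ.restrict B).map (X n)).bind (Q n)) A).toReal =
      ∫ ω, D.indicator 1 (fun i => X i.1 ω) * (Q n (X n ω) A).toReal ∂μ := by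
    rw [Measure.bind_apply hA (Q n).aemeasurable, lintegral_map hQA (hX n), ← integral_toReal
      hQX.aemeasurable (.of_forall fun _ => measure_lt_top _ _), ← integral_indicator hB]
    congr with ω
    exact (mul_eq_indicator _ ω).symm
  rw [Measure.map_apply (hX _) hA]
  exact (ENNReal.toReal_eq_toReal_iff' (by finiteness) (by finiteness)).1
    (hleft.trans (hstep.trans hright.symm))

theorem measurableSet_avoidance (hX : ∀ n, Measurable (X n)) {U : Set E} (hU : MeasurableSet U)
    (n : ℕ) : MeasurableSet (avoidance X U n) := by
  induction n with
  | zero => exact avoidance_zero (X := X) U ▸ .univ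
  | succ n ih => exact avoidance_succ (X := X) U n ▸ (hX _ hU.compl).inter ih

variable {P : Kernel E E} [IsFiniteKernel P] {U : Set E} {x : E}

theorem IsMChain.tabooMeasure_eq_map (hX : IsMChain P x μ X) (hU : MeasurableSet U) (n : ℕ) :
    tabooMeasure P U x n = (μ.restrict (avoidance X U n)).map (X n) := by
  obtain ⟨_, hXm, hX0, hstep⟩ := hX
  induction n with
  | zero =>
    rw [avoidance_zero, Measure.restrict_univ, Measure.map_congr hX0, Measure.map_const,
      measure_univ, one_smul, tabooMeasure]
  | succ n ih =>
    have havoid : avoidance X U n =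
        (fun ω (i : Fin (n + 1)) => X i ω) ⁻¹' Set.pi {i | 1 ≤ i.1} fun _ => Uᶜ := by
      ext ω
      simp only [mem_avoidance, Set.mem_preimage, Set.mem_pi, Set.mem_ofPred_eq, Fin.forall_iff,
        Set.mem_compl_iff]
      grind
    rw [avoidance_succ, ← Measure.restrict_restrict (hXm _ hU.compl),
      ← Measure.restrict_map (hXm _) hU.compl, havoid, hstep.map_restrict_succ hXm
      (.pi (Set.to_countable _) fun _ _ => hU.compl), ← havoid, ← ih, tabooMeasure]

theorem IsMChain.tsum_tabooMeasure_univ_ne_top (hX : IsMChain P x μ X) (hU : MeasurableSet U)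
    (hhit : ∀ᵐ ω ∂μ, ∃ n, 1 ≤ n ∧ X n ω ∈ U)
    (hint : Integrable (fun ω => ((sInf {n : ℕ | 1 ≤ n ∧ X n ω ∈ U} : ℕ) : ℝ)) μ) :
    ∑' n, tabooMeasure P U x n Set.univ ≠ ∞ := by
  have hXm := hX.2.1
  have hA := measurableSet_avoidance hXm hU
  have mass (n : ℕ) : tabooMeasure P U x n Set.univ = ∫⁻ ω, (avoidance X U n).indicator 1 ω ∂μ := by
    rw [hX.tabooMeasure_eq_map hU, Measure.map_apply (hXm n) .univ, Set.preimage_univ,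
      Measure.restrict_apply_univ, lintegral_indicator_one (hA n)]
  simp only [mass]
  rw [← lintegral_tsum fun n => (measurable_one.indicator (hA n)).aemeasurable]
  refine ne_top_of_le_ne_top hint.lintegral_lt_top.ne (lintegral_mono_ae ?_)
  filter_upwards [hhit] with ω hω
  simpa only [ENNReal.ofReal_natCast] using tsum_indicator_avoidance_le hω

end HittingTime

section FiniteStrassen

variable {ι F : Type*} [LinearOrder ι] [PartialOrder F]

/-- The value of the problem of maximizing `∑ i ∈ s, f i (c i)` over the increasing chains `c`
indexed by `ι` all of whose members are at most `x`. -/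
noncomputable def chainValue (f : ι → F → ℝ) (s : Finset ι) (x : F) : ℝ :=
  ⨆ c : {c : ι →o F // ∀ i, c i ≤ x}, ∑ i ∈ s, f i (c.1 i)

section Finite

variable [Finite ι] [Finite F] (f : ι → F → ℝ) (s : Finset ι)

instance finite_orderHom : Finite (ι →o F) :=
  DFunLike.finite _

theorem sum_le_chainValue {c : ι →o F} {x : F} (hc : ∀ i, c i ≤ x) :
    ∑ i ∈ s, f i (c i) ≤ chainValue f s x :=
  le_ciSup (f := fun c : {c : ι →o F // ∀ i, c i ≤ x} => ∑ i ∈ s, f i (c.1 i))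
    (Set.finite_range _).bddAbove ⟨c, hc⟩

theorem exists_sum_eq_chainValue (x : F) :
    ∃ c : ι →o F, (∀ i, c i ≤ x) ∧ ∑ i ∈ s, f i (c i) = chainValue f s x := by
  have : Nonempty {c : ι →o F // ∀ i, c i ≤ x} := ⟨⟨.const ι x, fun _ => le_rfl⟩⟩
  obtain ⟨⟨c, hc⟩, h⟩ := exists_eq_ciSup_of_finite
    (f := fun c : {c : ι →o F // ∀ i, c i ≤ x} => ∑ i ∈ s, f i (c.1 i))
  exact ⟨c, hc, h⟩

theorem chainValue_mono : Monotone (chainValue f s) := fun x y hxy => by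
  obtain ⟨c, hc, h⟩ := exists_sum_eq_chainValue f s x
  exact h ▸ sum_le_chainValue f s fun i => (hc i).trans hxy

/-- Following an optimal chain before time `m` and jumping to `x` at time `m`. -/
theorem chainValue_add_le {m : ι} (hm : ∀ i ∈ s, i < m) (x : F) :
    chainValue f s x + f m x ≤ chainValue f (insert m s) x := by
  obtain ⟨c, hc, h⟩ := exists_sum_eq_chainValue f s x
  have hmono : Monotone fun i => if i < m then c i else x := fun i j hij => by
    dsimp only
    split_ifs with hi hj hj
    · exact c.monotone hij
    · exact hc i
    · exact absurd (hij.trans_lt hj) hi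
    · exact le_rfl
  have hle (i : ι) : (⟨_, hmono⟩ : ι →o F) i ≤ x := by
    change (if i < m then c i else x) ≤ x
    split_ifs
    exacts [hc i, le_rfl]
  refine le_of_eq_of_le ?_ (sum_le_chainValue f (insert m s) hle)
  rw [Finset.sum_insert fun hms => lt_irrefl m (hm m hms), ← h, add_comm]
  refine congrArg₂ (· + ·) ?_ (Finset.sum_congr rfl fun i hi => ?_)
  · simp
  · simp [hm i hi]

variable [MeasurableSpace F] [MeasurableSingletonClass F] {M : ι → Measure F}
  [∀ i, IsProbabilityMeasure (M i)]

theorem sum_integral_le_integral_chainValue (hM : ∀ ⦃i j⦄, i ≤ j → StochDom (M i) (M j)) :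
    ∀ m, (∀ i ∈ s, i ≤ m) → ∑ i ∈ s, ∫ x, f i x ∂(M i) ≤ ∫ x, chainValue f s x ∂(M m) := by
  induction s using Finset.induction_on_max with
  | empty => simp [chainValue]
  | insert a s ha ih =>
    intro m hm
    rw [Finset.sum_insert fun has => lt_irrefl a (ha a has), add_comm]
    calc ∑ i ∈ s, ∫ x, f i x ∂(M i) + ∫ x, f a x ∂(M a)
        ≤ ∫ x, chainValue f s x ∂(M a) + ∫ x, f a x ∂(M a) := by
          gcongr
          exact ih a fun i hi => (ha i hi).le
      _ = ∫ x, (chainValue f s x + f a x) ∂(M a) := (integral_add .of_finite .of_finite).symm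
      _ ≤ ∫ x, chainValue f (insert a s) x ∂(M a) :=
          integral_mono .of_finite .of_finite (chainValue_add_le f s ha)
      _ ≤ ∫ x, chainValue f (insert a s) x ∂(M m) := by
          obtain ⟨C, hC⟩ := (Set.finite_range fun x => |chainValue f (insert a s) x|).bddAbove
          exact (hM (hm a (Finset.mem_insert_self a s))).integral_le (.of_discrete)
            (chainValue_mono f _) fun x => hC ⟨x, rfl⟩

end Finite

variable [MeasurableSpace F] [MeasurableSingletonClass F] {M : ι → Measure F}
  [∀ i, IsProbabilityMeasure (M i)]

variable [Finite F] [Nonempty F]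

theorem exists_sum_integral_le_sum [Fintype ι] (f : ι → F → ℝ)
    (hM : ∀ ⦃i j⦄, i ≤ j → StochDom (M i) (M j)) :
    ∃ c : ι →o F, ∑ i, ∫ x, f i x ∂(M i) ≤ ∑ i, f i (c i) := by
  cases isEmpty_or_nonempty ι
  · exact ⟨.const ι (Classical.arbitrary F), by simp⟩
  obtain ⟨m, hm⟩ := Finite.exists_max (id : ι → ι)
  obtain ⟨x, hx⟩ := Finite.exists_max (chainValue f Finset.univ)
  obtain ⟨c, -, hc⟩ := exists_sum_eq_chainValue f Finset.univ x
  refine ⟨c, (sum_integral_le_integral_chainValue f Finset.univ hM m fun i _ => hm i).trans ?_⟩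
  calc ∫ y, chainValue f Finset.univ y ∂(M m)
      ≤ ∫ _, chainValue f Finset.univ x ∂(M m) := integral_mono .of_finite .of_finite hx
    _ = ∑ i, f i (c i) := by simp [hc]

/-- By Hahn–Banach it suffices to bound every linear functional of the marginals by its maximum
over the increasing chains. -/
theorem marginals_mem_convexHull_range [Finite ι]
    (hM : ∀ ⦃i j⦄, i ≤ j → StochDom (M i) (M j)) :
    (fun q : ι × F => (M q.1).real {q.2}) ∈
      convexHull ℝ (Set.range fun (c : ι →o F) (q : ι × F) =>
        Set.indicator {q.2} (1 : F → ℝ) (c q.1)) := by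
  classical
  have := Fintype.ofFinite ι
  have := Fintype.ofFinite F
  by_contra h
  obtain ⟨φ, u, hφ, hu⟩ := geometric_hahn_banach_closed_point (convex_convexHull ℝ _)
    ((Set.finite_range _).isClosed_convexHull ℝ) h
  let f (i : ι) (x : F) : ℝ := φ fun q => if (i, x) = q then 1 else 0
  have hφf (v : ι × F → ℝ) : φ v = ∑ i, ∑ x, v (i, x) * f i x := by
    rw [← Fintype.sum_prod_type', ← φ.coe_coe, LinearMap.pi_apply_eq_sum_univ]
    rfl
  obtain ⟨c, hc⟩ := exists_sum_integral_le_sum f hM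
  have hcu := hφ _ (subset_convexHull ℝ _ ⟨c, rfl⟩)
  rw [hφf] at hcu hu
  simp only [integral_fintype .of_finite, smul_eq_mul] at hc
  simp only [Set.indicator_apply, Set.mem_singleton_iff, Pi.one_apply, ite_mul, one_mul, zero_mul,
    Finset.sum_ite_eq, Finset.mem_univ, if_true] at hcu
  exact (hu.trans_le hc).not_gt hcu

theorem exists_monotone_coupling_of_finite [Finite ι]
    (hM : ∀ ⦃i j⦄, i ≤ j → StochDom (M i) (M j)) :
    ∃ Γ : Measure (ι → F), IsProbabilityMeasure Γ ∧ (∀ i, Γ.map (fun v => v i) = M i) ∧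
      ∀ᵐ v ∂Γ, Monotone v := by
  obtain ⟨κ, _, w, z, hw0, hw1, hz, hsum⟩ :=
    mem_convexHull_iff_exists_fintype.1 (marginals_mem_convexHull_range hM)
  choose c hc using hz
  refine ⟨∑ k, ENNReal.ofReal (w k) • .dirac (c k), ⟨?_⟩, fun i => ?_, ?_⟩
  · simp [← ENNReal.ofReal_sum_of_nonneg fun k _ => hw0 k, hw1]
  · refine Measure.ext_of_singleton fun x => ?_
    have hx : ∑ k, w k * Set.indicator {x} 1 (c k i) = (M i).real {x} := by
      simpa [← hc] using congrFun hsum (i, x)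
    rw [Measure.map_apply (measurable_pi_apply i) (.singleton x), Measure.finsetSum_apply,
      ← ofReal_measureReal (μ := M i), ← hx, ENNReal.ofReal_sum_of_nonneg]
    · refine Finset.sum_congr rfl fun k _ => ?_
      by_cases hk : c k i = x <;> simp [hk]
    · exact fun k _ => mul_nonneg (hw0 k) (Set.indicator_nonneg (fun _ _ => zero_le_one) _)
  · rw [ae_iff, Measure.finsetSum_apply]
    simp [(c _).monotone]

end FiniteStrassen

section CompactLimit

variable {ι κ K : Type*} [Countable ι] [TopologicalSpace K] [CompactSpace K]
  [TopologicalSpace.MetrizableSpace K] [MeasurableSpace K] [BorelSpace K]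

theorem ae_mem_of_tendsto_of_isClosed {Ω : Type*} [TopologicalSpace Ω] [MeasurableSpace Ω]
    [OpensMeasurableSpace Ω] [HasOuterApproxClosed Ω] {l : Filter κ} [l.NeBot]
    {Γ : κ → ProbabilityMeasure Ω} {Γ' : ProbabilityMeasure Ω} (hΓ : Tendsto Γ l (𝓝 Γ'))
    {C : Set Ω} (hC : IsClosed C) (h : ∀ᶠ k in l, ∀ᵐ v ∂(Γ k : Measure Ω), v ∈ C) :
    ∀ᵐ v ∂(Γ' : Measure Ω), v ∈ C := by
  have hle := ProbabilityMeasure.le_liminf_measure_open_of_tendsto hΓ hC.isOpen_compl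
  have hzero : (fun k => (Γ k : Measure Ω) Cᶜ) =ᶠ[l] fun _ => 0 := h.mono fun k hk => hk
  rw [liminf_congr hzero, liminf_const, nonpos_iff_eq_zero] at hle
  exact hle

theorem exists_monotone_coupling_of_tendsto [Preorder ι] [Preorder K] [OrderClosedTopology K]
    {l : Filter κ} [l.NeBot]
    {N : κ → ι → ProbabilityMeasure K} {M : ι → ProbabilityMeasure K}
    (hN : ∀ i, Tendsto (N · i) l (𝓝 (M i))) {Γ : κ → ProbabilityMeasure (ι → K)}
    (hmarg : ∀ i, ∀ᶠ k in l, (Γ k).map (measurable_pi_apply i).aemeasurable = N k i)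
    (hmono : ∀ ⦃i j⦄, i ≤ j → ∀ᶠ k in l, ∀ᵐ v ∂(Γ k : Measure (ι → K)), v i ≤ v j) :
    ∃ Γ : ProbabilityMeasure (ι → K),
      (∀ i, Γ.map (measurable_pi_apply i).aemeasurable = M i) ∧
      ∀ᵐ v ∂(Γ : Measure (ι → K)), Monotone v := by
  obtain ⟨Γ', -, hΓ'⟩ := isCompact_univ.ultrafilter_le_nhds ((Ultrafilter.of l).map Γ) (by simp)
  have hlim : Tendsto Γ (Ultrafilter.of l) (𝓝 Γ') := hΓ'
  have hl : (Ultrafilter.of l : Filter κ) ≤ l := Ultrafilter.of_le l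
  refine ⟨Γ', fun i => ?_, ?_⟩
  · exact tendsto_nhds_unique
      (((ProbabilityMeasure.continuous_map (continuous_apply i)).tendsto Γ').comp hlim)
      (((hN i).mono_left hl).congr' ((hmarg i).filter_mono hl |>.mono fun k hk => hk.symm))
  · simp only [Monotone, ae_all_iff]
    exact fun i j hij => ae_mem_of_tendsto_of_isClosed hlim
      (isClosed_le (continuous_apply i) (continuous_apply j)) ((hmono hij).filter_mono hl)

end CompactLimit

section CantorSpace

instance orderClosedTopology_bool : OrderClosedTopology Bool :=
  ⟨isClosed_discrete _⟩

theorem monotone_extend {α β γ : Type*} [Preorder γ] (f : α → β) (y : β → γ) :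
    Monotone fun g : α → γ => Function.extend f g y := fun g h hgh b => by
  classical
  simp only [Function.extend]
  split_ifs
  exacts [hgh _, le_rfl]

/-- The sequence `z` with its entries outside the finite set `t` replaced by `false`. -/
noncomputable def truncation (t : Finset ℕ) (z : ℕ → Bool) : ℕ → Bool :=
  Function.extend Subtype.val (t.restrict z) ⊥

theorem measurable_truncation (t : Finset ℕ) : Measurable (truncation t) :=
  (measurable_of_finite fun w : t → Bool => Function.extend Subtype.val w ⊥).comp
    t.measurable_restrict

theorem tendsto_truncation (z : ℕ → Bool) : Tendsto (truncation · z) atTop (𝓝 z) :=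
  tendsto_pi_nhds.2 fun n => tendsto_const_nhds.congr' <| by
    filter_upwards [eventually_ge_atTop {n}] with t ht
    exact (Subtype.val_injective.extend_apply (t.restrict z) ⊥
      ⟨n, ht (Finset.mem_singleton_self n)⟩).symm

variable {ι : Type*} [LinearOrder ι] {M : ι → ProbabilityMeasure (ℕ → Bool)}

theorem exists_truncated_coupling
    (hM : ∀ ⦃i j⦄, i ≤ j → StochDom (M i : Measure (ℕ → Bool)) (M j))
    (s : Finset ι) (t : Finset ℕ) :
    ∃ Γ : ProbabilityMeasure (ι → ℕ → Bool),
      (∀ i ∈ s, Γ.map (measurable_pi_apply i).aemeasurable =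
        (M i).map (measurable_truncation t).aemeasurable) ∧
      ∀ i ∈ s, ∀ j ∈ s, i ≤ j → ∀ᵐ v ∂(Γ : Measure (ι → ℕ → Bool)), v i ≤ v j := by
  have hr : Measurable (t.restrict : (ℕ → Bool) → t → Bool) := t.measurable_restrict
  have (i : s) := Measure.isProbabilityMeasure_map (μ := (M i : Measure (ℕ → Bool))) hr.aemeasurable
  obtain ⟨Γ, hΓ, hmarg, hmono⟩ := exists_monotone_coupling_of_finite
    (M := fun i : s => (M i : Measure (ℕ → Bool)).map t.restrict)
    fun i j hij => (hM hij).map hr fun _ _ h (k : t) => h k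
  let e (w : t → Bool) : ℕ → Bool := Function.extend Subtype.val w ⊥
  have he : Measurable e := measurable_of_finite e
  let J (v : s → t → Bool) : ι → ℕ → Bool :=
    Function.extend Subtype.val (fun i => e (v i)) ⊥
  have hJ : Measurable J := measurable_of_finite J
  have hJs (v : s → t → Bool) {i : ι} (hi : i ∈ s) :
      J v i = e (v ⟨i, hi⟩) :=
    Subtype.val_injective.extend_apply _ _ (⟨i, hi⟩ : s)
  refine ⟨⟨Γ.map J, Measure.isProbabilityMeasure_map hJ.aemeasurable⟩, fun i hi => ?_, ?_⟩
  · refine Subtype.ext ?_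
    change (Γ.map J).map (fun v => v i) = (M i : Measure (ℕ → Bool)).map (e ∘ t.restrict)
    rw [Measure.map_map (measurable_pi_apply i) hJ, ← Measure.map_map he hr,
      ← hmarg ⟨i, hi⟩, Measure.map_map he (measurable_pi_apply _)]
    exact congrArg Γ.map (funext fun v => hJs v hi)
  · intro i hi j hj hij
    have hle : MeasurableSet {v : ι → ℕ → Bool | v i ≤ v j} :=
      measurableSet_le (measurable_pi_apply i) (measurable_pi_apply j)
    refine (ae_map_iff hJ.aemeasurable hle).2 ?_
    filter_upwards [hmono] with v hv
    rw [hJs v hi, hJs v hj]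
    exact monotone_extend _ _ (hv hij)

theorem exists_monotone_coupling_cantor [Countable ι]
    (hM : ∀ ⦃i j⦄, i ≤ j → StochDom (M i : Measure (ℕ → Bool)) (M j)) :
    ∃ Γ : ProbabilityMeasure (ι → ℕ → Bool),
      (∀ i, Γ.map (measurable_pi_apply i).aemeasurable = M i) ∧
      ∀ᵐ v ∂(Γ : Measure (ι → ℕ → Bool)), Monotone v := by
  choose Γ hmarg hmono using fun k : Finset ι × Finset ℕ => exists_truncated_coupling hM k.1 k.2
  have hmem (i : ι) : ∀ᶠ k : Finset ι × Finset ℕ in atTop, i ∈ k.1 := by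
    filter_upwards [eventually_ge_atTop ({i}, ∅)] with k hk
    exact hk.1 (Finset.mem_singleton_self i)
  refine exists_monotone_coupling_of_tendsto (l := atTop) (fun i => ?_)
    (fun i => (hmem i).mono fun k hk => hmarg k i hk) fun i j hij => ?_
  · have hlim := (tendstoInDistribution_of_ae_tendsto (μ' := (M i : Measure (ℕ → Bool)))
      (fun t => (measurable_truncation t).aemeasurable) aemeasurable_id
      (.of_forall tendsto_truncation)).tendsto
    simp only [Measure.map_id] at hlim
    exact hlim.comp (tendsto_snd.mono_left prod_atTop_atTop_eq.ge)
  · filter_upwards [hmem i, hmem j] with k hi hj using hmono k i hi j hj hij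

end CantorSpace

section OrderEmbedding

variable {E : Type*} [TopologicalSpace E] [PolishSpace E] [MeasurableSpace E] [BorelSpace E]

theorem analyticSet_image_snd {R : Set (E × E)} {S : Set E} (hR : MeasurableSet R)
    (hS : MeasurableSet S) : AnalyticSet (Prod.snd '' (R ∩ Prod.fst ⁻¹' S)) :=
  (hR.inter (measurable_fst hS)).analyticSet.image_of_continuous continuous_snd

variable [Preorder E] [OrderClosedTopology E]

theorem analyticSet_upperClosure {S : Set E} (hS : MeasurableSet S) :
    AnalyticSet (upperClosure S : Set E) := by
  have hle : MeasurableSet {p : E × E | p.1 ≤ p.2} :=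
    (isClosed_le continuous_fst continuous_snd).measurableSet
  convert! analyticSet_image_snd hle hS
  ext; simp [and_comm]

theorem analyticSet_lowerClosure {S : Set E} (hS : MeasurableSet S) :
    AnalyticSet (lowerClosure S : Set E) := by
  have hge : MeasurableSet {p : E × E | p.2 ≤ p.1} :=
    (isClosed_le continuous_snd continuous_fst).measurableSet
  convert! analyticSet_image_snd hge hS
  ext; simp [and_comm]

/-- Lusin separation alternates with taking upper closures; the union of the resulting increasing
sequence of Borel sets is an upper set. -/
theorem exists_measurableSet_isUpperSet_separating {V B : Set E} (hV : MeasurableSet V)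
    (hB : AnalyticSet B) (hlower : IsLowerSet B) (hVB : Disjoint V B) :
    ∃ C : Set E, MeasurableSet C ∧ IsUpperSet C ∧ V ⊆ C ∧ Disjoint C B := by
  have hstep (C : {C : Set E // MeasurableSet C ∧ Disjoint C B}) :
      ∃ D : {C : Set E // MeasurableSet C ∧ Disjoint C B}, (upperClosure C.1 : Set E) ⊆ D.1 := by
    have hdisj : Disjoint (upperClosure C.1 : Set E) B :=
      Set.disjoint_left.2 fun z hz hzB =>
        let ⟨a, ha, haz⟩ := mem_upperClosure.1 hz
        Set.disjoint_left.1 C.2.2 ha (hlower haz hzB)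
    obtain ⟨D, hCD, hBD, hD⟩ := (analyticSet_upperClosure C.2.1).measurablySeparable hB hdisj
    exact ⟨⟨D, hD, hBD.symm⟩, hCD⟩
  choose next hnext using hstep
  let C (n : ℕ) := next^[n] ⟨V, hV, hVB⟩
  refine ⟨⋃ n, (C n).1, .iUnion fun n => (C n).2.1, fun a b hab ha => ?_,
    Set.subset_iUnion (fun n => (C n).1) 0, Set.disjoint_iUnion_left.2 fun n => (C n).2.2⟩
  obtain ⟨n, hn⟩ := Set.mem_iUnion.1 ha
  refine Set.mem_iUnion.2 ⟨n + 1, ?_⟩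
  rw [show C (n + 1) = next (C n) from Function.iterate_succ_apply' _ _ _]
  exact hnext _ (mem_upperClosure.2 ⟨a, hn, hab⟩)

theorem exists_isUpperSet_prod_compl_mem_nhds {p : E × E} (h : ¬p.1 ≤ p.2) :
    ∃ C : Set E, MeasurableSet C ∧ IsUpperSet C ∧ C ×ˢ Cᶜ ∈ 𝓝 p := by
  have hopen : IsOpen {p : E × E | ¬p.1 ≤ p.2} :=
    (isClosed_le continuous_fst continuous_snd).isOpen_compl
  obtain ⟨V, W, hV, hW, hpV, hpW, hVW⟩ := isOpen_prod_iff.1 hopen p.1 p.2 h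
  have hdisj : Disjoint V (lowerClosure W : Set E) :=
    Set.disjoint_left.2 fun v hv hvW =>
      let ⟨w, hw, hvw⟩ := mem_lowerClosure.1 hvW
      hVW (Set.mk_mem_prod hv hw) hvw
  obtain ⟨C, hC, hupper, hVC, hCW⟩ := exists_measurableSet_isUpperSet_separating
    hV.measurableSet (analyticSet_lowerClosure hW.measurableSet) (lowerClosure W).lower hdisj
  exact ⟨C, hC, hupper, mem_of_superset (prod_mem_nhds (hV.mem_nhds hpV) (hW.mem_nhds hpW)) <|
    Set.prod_mono hVC (subset_lowerClosure.trans hCW.subset_compl_left)⟩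

variable (E) in
theorem exists_seq_isUpperSet_forall_le :
    ∃ U : ℕ → Set E, (∀ n, MeasurableSet (U n) ∧ IsUpperSet (U n)) ∧
      ∀ x y, (∀ n, x ∈ U n → y ∈ U n) → x ≤ y := by
  have : Nonempty {C : Set E // MeasurableSet C ∧ IsUpperSet C} :=
    ⟨⟨∅, .empty, isUpperSet_empty⟩⟩
  have hloc (p : E × E) : ∃ C : {C : Set E // MeasurableSet C ∧ IsUpperSet C},
      ¬p.1 ≤ p.2 → C.1 ×ˢ C.1ᶜ ∈ 𝓝 p := by
    by_cases h : p.1 ≤ p.2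
    · exact ⟨Classical.arbitrary _, fun hn => absurd h hn⟩
    · obtain ⟨C, hC, hupper, hp⟩ := exists_isUpperSet_prod_compl_mem_nhds h
      exact ⟨⟨C, hC, hupper⟩, fun _ => hp⟩
  choose C hC using hloc
  obtain ⟨t, -, ht, hcover⟩ := TopologicalSpace.countable_cover_nhdsWithin
    (s := {p : E × E | ¬p.1 ≤ p.2}) fun p hp => mem_nhdsWithin_of_mem_nhds (hC p hp)
  obtain ⟨U, hU⟩ := Set.countable_iff_exists_subset_range.1 (ht.image C)
  refine ⟨fun n => (U n).1, fun n => (U n).2, fun x y hxy => ?_⟩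
  by_contra hn
  obtain ⟨p, hp, hxp, hyp⟩ := Set.mem_iUnion₂.1 (hcover (a := (x, y)) hn)
  obtain ⟨n, hUn⟩ := hU ⟨p, hp, rfl⟩
  rw [← hUn] at hxp hyp
  exact hyp (hxy n hxp)

theorem exists_measurable_orderEmbedding (E : Type*) [TopologicalSpace E] [PolishSpace E]
    [MeasurableSpace E] [BorelSpace E] [PartialOrder E] [OrderClosedTopology E] :
    ∃ u : E ↪o (ℕ → Bool), Measurable u := by
  classical
  obtain ⟨U, hU, hle⟩ := exists_seq_isUpperSet_forall_le E
  refine ⟨.ofMapLEIff (fun x n => decide (x ∈ U n)) fun x y => ?_, ?_⟩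
  · simp only [Pi.le_def, Bool.le_iff_imp, decide_eq_true_eq]
    exact ⟨hle x y, fun hxy n hx => (hU n).2 hxy hx⟩
  · exact measurable_pi_iff.2 fun n => measurable_to_bool (by simpa [Set.preimage] using (hU n).1)

end OrderEmbedding

section Coupling

variable {E : Type*} [TopologicalSpace E] [PolishSpace E] [MeasurableSpace E] [BorelSpace E]
  [PartialOrder E] [OrderClosedTopology E]

theorem exists_monotone_coupling [Nonempty E] {ι : Type*} [LinearOrder ι] [Countable ι]
    {M : ι → ProbabilityMeasure E} (hM : ∀ ⦃i j⦄, i ≤ j → StochDom (M i : Measure E) (M j)) :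
    ∃ Γ : ProbabilityMeasure (ι → E), (∀ i, (Γ : Measure (ι → E)).map (· i) = M i) ∧
      ∀ᵐ v ∂(Γ : Measure (ι → E)), Monotone v := by
  obtain ⟨u, hu⟩ := exists_measurable_orderEmbedding E
  have hemb : MeasurableEmbedding u := hu.measurableEmbedding u.injective
  obtain ⟨ψ, hψ, hψu⟩ := hemb.exists_measurable_extend measurable_id fun _ => ‹Nonempty E›
  obtain ⟨Γ, hmarg, hmono⟩ := exists_monotone_coupling_cantor
    (M := fun i => (M i).map hu.aemeasurable) fun i j hij => (hM hij).map hu u.monotone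
  have hmarg (i : ι) : (Γ : Measure (ι → ℕ → Bool)).map (· i) = (M i : Measure E).map u :=
    congrArg ProbabilityMeasure.toMeasure (hmarg i)
  have hrange : ∀ᵐ v ∂(Γ : Measure (ι → ℕ → Bool)), ∀ i, v i ∈ Set.range u := by
    refine ae_all_iff.2 fun i => ae_of_ae_map (measurable_pi_apply i).aemeasurable ?_
    rw [hmarg]
    exact (ae_map_iff hu.aemeasurable hemb.measurableSet_range).2 (.of_forall Set.mem_range_self)
  have hpull : Measurable fun (v : ι → ℕ → Bool) i => ψ (v i) :=
    measurable_pi_iff.2 fun i => hψ.comp (measurable_pi_apply i)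
  refine ⟨Γ.map hpull.aemeasurable, fun i => ?_, ?_⟩
  · calc ((Γ.map hpull.aemeasurable : ProbabilityMeasure _) : Measure (ι → E)).map (· i)
      _ = ((Γ : Measure (ι → ℕ → Bool)).map (· i)).map ψ := by
        rw [ProbabilityMeasure.toMeasure_map, Measure.map_map (measurable_pi_apply i) hpull,
          Measure.map_map hψ (measurable_pi_apply i)]
        rfl
      _ = M i := by rw [hmarg, Measure.map_map hψ hu, hψu, Measure.map_id]
  · refine (ae_map_iff hpull.aemeasurable isClosed_monotone.measurableSet).2 ?_
    filter_upwards [hmono, hrange] with v hv hvu i j hij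
    obtain ⟨x, hx⟩ := hvu i
    obtain ⟨y, hy⟩ := hvu j
    have hxy := hv hij
    have hinv (z : E) : ψ (u z) = z := congrFun hψu z
    rw [← hx, ← hy, u.le_iff_le] at hxy
    simpa only [← hx, ← hy, hinv] using hxy

variable (E) in
theorem exists_measurable_strictMono :
    ∃ g : E → ℝ, Measurable g ∧ StrictMono g ∧ ∃ C, ∀ x, |g x| ≤ C := by
  obtain ⟨u, hu⟩ := exists_measurable_orderEmbedding E
  have hmono : Monotone (Cardinal.cantorFunction (1 / 3)) := fun f g hfg =>
    Cardinal.cantorFunction_le (by norm_num) (by norm_num) fun n => hfg n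
  have hinj := Cardinal.cantorFunction_injective (c := 1 / 3) (by norm_num) (by norm_num)
  refine ⟨Cardinal.cantorFunction (1 / 3) ∘ u, .comp ?_ hu,
    (hmono.strictMono_of_injective hinj).comp u.strictMono, Cardinal.cantorFunction (1 / 3) ⊤,
    fun x => ?_⟩
  · have hbit (n : ℕ) : Measurable fun b => bif b then (1 / 3 : ℝ) ^ n else 0 := measurable_from_top
    exact .tsum fun n => (hbit n).comp (measurable_pi_apply n)
  · have hnonneg : 0 ≤ Cardinal.cantorFunction (1 / 3) (u x) :=
      tsum_nonneg fun n => Cardinal.cantorFunctionAux_nonneg (by norm_num)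
    exact (abs_of_nonneg hnonneg).trans_le (hmono le_top)

theorem StochDom.eq_of_integral_le {μ ν : ProbabilityMeasure E} (h : StochDom (μ : Measure E) ν)
    {g : E → ℝ} (hg : Measurable g) (hmono : StrictMono g) {C : ℝ} (hC : ∀ x, |g x| ≤ C)
    (hle : ∫ x, g x ∂(ν : Measure E) ≤ ∫ x, g x ∂(μ : Measure E)) : μ = ν := by
  have : Nonempty E := (μ : Measure E).nonempty_of_neZero
  obtain ⟨Γ, hmarg, hΓ⟩ := exists_monotone_coupling (M := fun b => cond b ν μ) (by
    rintro (_ | _) (_ | _) hij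
    exacts [.refl _, h, absurd hij (by decide), .refl _])
  have hint (b : Bool) : Integrable (fun v : Bool → E => g (v b)) Γ :=
    .of_bound (hg.comp (measurable_pi_apply b)).aestronglyMeasurable C (.of_forall fun v => hC _)
  have hmap (b : Bool) : ∫ v, g (v b) ∂(Γ : Measure (Bool → E)) =
      ∫ x, g x ∂((cond b ν μ : ProbabilityMeasure E) : Measure E) := by
    rw [← hmarg, integral_map (measurable_pi_apply b).aemeasurable hg.aestronglyMeasurable]
  have hnonneg : ∀ᵐ v ∂(Γ : Measure (Bool → E)), g (v false) ≤ g (v true) :=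
    hΓ.mono fun v hv => hmono.monotone (hv (Bool.false_le true))
  have heq : ∀ᵐ v ∂(Γ : Measure (Bool → E)), v false = v true := by
    have hzero := (integral_eq_iff_of_ae_le (hint false) (hint true) hnonneg).1 <|
      (integral_mono_ae (hint _) (hint _) hnonneg).antisymm (by rw [hmap, hmap]; exact hle)
    filter_upwards [hΓ, hzero] with v hv hg
    exact (hv (Bool.false_le true)).eq_of_not_lt fun hlt => (hmono hlt).ne hg
  refine Subtype.ext ?_
  calc (μ : Measure E) = (Γ : Measure (Bool → E)).map (· false) := (hmarg false).symm
    _ = (Γ : Measure (Bool → E)).map (· true) := Measure.map_congr heq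
    _ = ν := hmarg true

theorem StochDom.antisymm {μ ν : ProbabilityMeasure E} (h : StochDom (μ : Measure E) ν)
    (h' : StochDom (ν : Measure E) μ) : μ = ν :=
  let ⟨_, hg, hmono, _, hC⟩ := exists_measurable_strictMono E
  h.eq_of_integral_le hg hmono hC (h'.integral_le hg hmono.monotone hC)

theorem exists_tendsto_stochDom [Nonempty E] (hE : BMC E) {μ : ℕ → ProbabilityMeasure E}
    (hμ : ∀ ⦃m n⦄, m ≤ n → StochDom (μ m : Measure E) (μ n)) {ρ : ProbabilityMeasure E}
    (hρ : ∀ n, StochDom (μ n : Measure E) ρ) :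
    ∃ π : ProbabilityMeasure E, Tendsto μ atTop (𝓝 π) ∧
      (∀ n, StochDom (μ n : Measure E) π) ∧ StochDom (π : Measure E) ρ := by
  have hM : ∀ ⦃i j : WithTop ℕ⦄, i ≤ j →
      StochDom (i.recTopCoe ρ μ : ProbabilityMeasure E).toMeasure
        (j.recTopCoe ρ μ : ProbabilityMeasure E)
    | ⊤, ⊤, _ => .refl _
    | ⊤, (_ : ℕ), h => absurd (top_le_iff.1 h) (WithTop.coe_ne_top)
    | (m : ℕ), ⊤, _ => hρ m
    | (_ : ℕ), (_ : ℕ), h => hμ (WithTop.coe_le_coe.1 h)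
  obtain ⟨Γ, hmarg, hΓ⟩ := exists_monotone_coupling
    (M := fun i : WithTop ℕ => i.recTopCoe ρ μ) hM
  have hX (i : WithTop ℕ) : Measurable fun v : WithTop ℕ → E => v i := measurable_pi_apply i
  have hmono : ∀ᵐ v ∂(Γ : Measure (WithTop ℕ → E)), Monotone fun n : ℕ => v n :=
    hΓ.mono fun v hv => hv.comp WithTop.coe_mono
  obtain ⟨Z, hZ, hlim⟩ := measurable_limit_of_tendsto_metrizable_ae (μ := (Γ : Measure _))
    (f := fun (n : ℕ) (v : WithTop ℕ → E) => v n) (L := atTop) (fun n => (hX n).aemeasurable) <| by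
      filter_upwards [hΓ, hmono] with v hv hv'
      exact hE _ _ hv' fun n => hv le_top
  refine ⟨Γ.map hZ.aemeasurable, ?_, fun n => ?_, ?_⟩
  · have hlaw : μ = fun n : ℕ => Γ.map (hX n).aemeasurable :=
      funext fun n => Subtype.ext (hmarg n).symm
    rw [hlaw]
    exact (tendstoInDistribution_of_ae_tendsto (fun n : ℕ => (hX n).aemeasurable)
      hZ.aemeasurable hlim).tendsto
  · rw [ProbabilityMeasure.toMeasure_map, ← show _ = (μ n : Measure E) from hmarg n]
    exact .of_ae_le (hX n) hZ <| by
      filter_upwards [hmono, hlim] with v hv hvZ using hv.ge_of_tendsto hvZ n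
  · rw [ProbabilityMeasure.toMeasure_map, ← show _ = (ρ : Measure E) from hmarg ⊤]
    exact .of_ae_le hZ (hX ⊤) <| by
      filter_upwards [hΓ, hlim] with v hv hvZ using le_of_tendsto' hvZ fun n => hv le_top

end Coupling

section InvariantMeasure

variable {E : Type*} [TopologicalSpace E] [PolishSpace E] [MeasurableSpace E] [BorelSpace E]
  [PartialOrder E] [OrderClosedTopology E]

variable (E) in
/-- The stochastic order on the probability measures of `E`. It is not an instance, since
`ProbabilityMeasure E` carries no canonical order. -/
@[reducible] def stochPartialOrder : PartialOrder (ProbabilityMeasure E) where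
  le μ ν := StochDom (μ : Measure E) ν
  le_refl _ := StochDom.refl _
  le_trans _ _ _ := StochDom.trans
  le_antisymm _ _ := StochDom.antisymm

attribute [local instance] stochPartialOrder

theorem le_iff_stochDom {μ ν : ProbabilityMeasure E} : μ ≤ ν ↔ StochDom (μ : Measure E) ν :=
  Iff.rfl

variable (E) in
theorem exists_strictMono_probabilityMeasure :
    ∃ Φ : ProbabilityMeasure E → ℝ, StrictMono Φ ∧ BddAbove (Set.range Φ) := by
  obtain ⟨g, hg, hmono, C, hC⟩ := exists_measurable_strictMono E
  have hΦ : Monotone fun μ : ProbabilityMeasure E => ∫ x, g x ∂(μ : Measure E) :=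
    fun μ ν h => (le_iff_stochDom.1 h).integral_le hg hmono.monotone hC
  refine ⟨fun μ => ∫ x, g x ∂(μ : Measure E), fun μ ν h => ?_, C,
    Set.forall_mem_range.2 fun μ => ?_⟩
  · exact (hΦ h.le).lt_of_not_ge fun hle =>
      h.ne ((le_iff_stochDom.1 h.le).eq_of_integral_le hg hmono hC hle)
  · calc ∫ x, g x ∂(μ : Measure E) ≤ ∫ _, C ∂(μ : Measure E) :=
        integral_mono (.of_bound hg.aestronglyMeasurable C (.of_forall hC)) (integrable_const C)
          fun x => (le_abs_self _).trans (hC x)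
      _ = C := by simp

theorem exists_isLUB_range_of_monotone (hE : BMC E) {μ : ℕ → ProbabilityMeasure E}
    (hμ : Monotone μ) (hbdd : BddAbove (Set.range μ)) :
    ∃ π, IsLUB (Set.range μ) π := by
  obtain ⟨ρ₀, hρ₀⟩ := hbdd
  have : Nonempty E := (ρ₀ : Measure E).nonempty_of_neZero
  obtain ⟨π, hlim, hπ, -⟩ := exists_tendsto_stochDom hE (μ := μ) hμ (Set.forall_mem_range.1 hρ₀)
  refine ⟨π, Set.forall_mem_range.2 hπ, fun ρ hρ => ?_⟩
  obtain ⟨π', hlim', -, hπ'⟩ := exists_tendsto_stochDom hE (μ := μ) hμ (Set.forall_mem_range.1 hρ)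
  rwa [tendsto_nhds_unique hlim hlim']

theorem MonotoneKernel.exists_bind_eq {P : Kernel E E} [IsMarkovKernel P] (hP : MonotoneKernel P)
    (hE : BMC E) {α β : Measure E} [IsProbabilityMeasure α] [IsProbabilityMeasure β]
    (hαβ : StochDom α β) (hα : StochDom α (α.bind P)) (hβ : StochDom (β.bind P) β) :
    ∃ π : Measure E, IsProbabilityMeasure π ∧ π.bind P = π := by
  obtain ⟨Φ, hΦ, hbdd⟩ := exists_strictMono_probabilityMeasure E
  let T (μ : ProbabilityMeasure E) : ProbabilityMeasure E :=
    ⟨(μ : Measure E).bind P, inferInstance⟩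
  obtain ⟨π, hπ⟩ := exists_isFixedPt_of_le_of_strictMono hΦ hbdd
    (fun _ => exists_isLUB_range_of_monotone hE) (T := T) (fun _ _ h => StochDom.bind hP h)
    (a := ⟨α, ‹_›⟩) (b := ⟨β, ‹_›⟩) hαβ hα hβ
  exact ⟨π, inferInstance, congrArg ProbabilityMeasure.toMeasure hπ⟩

end InvariantMeasure

/-- Proposition 4.1: if the ordered Polish space `E` satisfies (BMC) and the
monotone kernel `P` satisfies condition (PR), then the Markov chain admits at least one
stationary distribution. -/
theorem stmt15 {E : Type*} [MetricSpace E] [PolishSpace E] [MeasurableSpace E] [BorelSpace E]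
    [PartialOrder E] [OrderClosedTopology E]
    (hbmc : BMC E)
    (P : Kernel E E) [IsMarkovKernel P] (hmono : MonotoneKernel P)
    (hpr : PRCond P) :
    ∃ π : Measure E, IsProbabilityMeasure π ∧ π.bind (fun a => P a) = π := by
  obtain ⟨x, y, hxy, ⟨_, _, _, X, hX, hhitX, hintX⟩, _, _, _, Y, hY, hhitY, hintY⟩ := hpr
  have hfinx := hX.tsum_tabooMeasure_univ_ne_top measurableSet_Ici hhitX hintX
  have hfiny := hY.tsum_tabooMeasure_univ_ne_top measurableSet_Iic hhitY hintY
  have := isProbabilityMeasure_greenLaw le_rfl hfinx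
  have := isProbabilityMeasure_greenLaw le_rfl hfiny
  have hα := stochDom_greenLaw_Ici le_rfl hfinx
  have hβ := stochDom_greenLaw_Iic le_rfl hfiny
  simp only [one_smul, tsub_self, zero_smul, add_zero] at hα hβ
  exact hmono.exists_bind_eq hbmc (stochDom_greenLaw_Ici_Iic hmono hxy hfinx hfiny) hα hβ
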